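/- Let X be a finite type of variables and R a binary relation on integer valuations X → ℤ. Let N : ℕ and let P : Fin N → Finset (MvPolynomial X ℚ) be finite sets of polynomials. Define a sequence of relations by R₀ = R and R_{k+1} x y ↔ (R_k x y ∧ ∀ p ∈ P k, p(x) = p(y)) (evaluating at integer points cast into ℚ). Suppose that for each k < N, every p ∈ P k satisfies: for all x, y with R_k x y, p(y) ≤ p(x) and 0 ≤ p(x); and suppose the final relation R_N is empty (there are no x, y with R_N x y). Then R has no infinite execution: there is no sequence f : ℕ → (X → ℤ) with R (f i) (f (i+1)) for all i. -/

import Mathlib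

/-!
Along an infinite execution, a quasi-ranking function is nonincreasing and nonnegative. A rational
polynomial takes values with bounded denominators at integer points, so its nonnegative values there
form a well-ordered set and the polynomial is eventually constant along the execution. Finitely many
polynomials are eventually constant simultaneously, so a tail of the execution survives each
restriction, and no tail can survive in the empty relation.
-/

open Filter Set

lemma eventually_eq_succ_of_isWF {β : Type*} [PartialOrder β] {s : Set β} (hs : s.IsWF)
    {g : ℕ → β} (hmem : ∀ᶠ i in atTop, g i ∈ s) (hle : ∀ᶠ i in atTop, g (i + 1) ≤ g i) :
    ∀ᶠ i in atTop, g i = g (i + 1) := by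
  obtain ⟨n, hn⟩ := eventually_atTop.1 (hmem.and hle)
  have : WellFoundedLT s := ⟨hs⟩
  let tail (i : ℕ) : s := ⟨g (n + i), (hn _ (Nat.le_add_right n i)).1⟩
  have tail_antitone : Antitone tail :=
    antitone_nat_of_succ_le fun i => (hn _ (Nat.le_add_right n i)).2
  obtain ⟨m, hm⟩ := WellFoundedLT.antitone_chain_condition tail_antitone
  have g_eq (i : ℕ) (hi : n + m ≤ i) : g (n + m) = g i := by
    obtain ⟨j, rfl⟩ := Nat.exists_eq_add_of_le hi
    simpa only [tail, add_assoc] using congrArg Subtype.val (hm (m + j) (Nat.le_add_right m j))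
  filter_upwards [eventually_ge_atTop (n + m)] with i hi
  exact (g_eq i hi).symm.trans (g_eq (i + 1) (Nat.le_succ_of_le hi))

section QuasiRanking

variable {α β : Type*}

/-- Quasi-ranking functions of a transition relation `r`, on arbitrary states and with values in an
arbitrary ordered type with a zero. -/
def IsQuasiRanking [LE β] [Zero β] (r : α → α → Prop) (v : α → β) : Prop :=
  ∀ x y, r x y → v y ≤ v x ∧ 0 ≤ v x

namespace IsQuasiRanking

variable [PartialOrder β] [Zero β] {r s : α → α → Prop} {f : ℕ → α}

lemma eventually_eq_succ {v : α → β} (hv : IsQuasiRanking r v) (hwf : (range v ∩ Ici 0).IsWF)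
    (hf : ∀ᶠ i in atTop, r (f i) (f (i + 1))) :
    ∀ᶠ i in atTop, v (f i) = v (f (i + 1)) :=
  eventually_eq_succ_of_isWF hwf
    (hf.mono fun i hi => ⟨mem_range_self (f i), (hv _ _ hi).2⟩)
    (hf.mono fun _ hi => (hv _ _ hi).1)

lemma eventually_rel_of_restrict {ι : Type*} {I : Finset ι} {v : ι → α → β}
    (hv : ∀ p ∈ I, IsQuasiRanking r (v p)) (hwf : ∀ p ∈ I, (range (v p) ∩ Ici 0).IsWF)
    (hrs : ∀ x y, r x y → (∀ p ∈ I, v p x = v p y) → s x y)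
    (hf : ∀ᶠ i in atTop, r (f i) (f (i + 1))) :
    ∀ᶠ i in atTop, s (f i) (f (i + 1)) := by
  have preserved : ∀ᶠ i in atTop, ∀ p ∈ I, v p (f i) = v p (f (i + 1)) :=
    (eventually_all_finset I).2 fun p hp => (hv p hp).eventually_eq_succ (hwf p hp) hf
  filter_upwards [hf, preserved] with i hi hpi using hrs _ _ hi hpi

end IsQuasiRanking

end QuasiRanking

lemma exists_forall_isInteger_smul_aeval {σ A B : Type*} [CommSemiring A] [CommSemiring B]
    [Algebra A B] (M : Submonoid A) [IsLocalization M B] (p : MvPolynomial σ B) :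
    ∃ d : M, ∀ x : σ → A, IsLocalization.IsInteger A
      ((d : A) • MvPolynomial.aeval (fun i => algebraMap A B (x i)) p) := by
  obtain ⟨d, hd⟩ := IsLocalization.exist_integer_multiples M p.support p.coeff
  refine ⟨d, fun x => ?_⟩
  rw [MvPolynomial.aeval_eq_eval, MvPolynomial.eval_eq, Finset.smul_sum]
  refine Subsemiring.sum_mem _ fun m hm => ?_
  rw [← smul_mul_assoc]
  refine IsLocalization.isInteger_mul (hd m hm) (Subsemiring.prod_mem _ fun i _ => ?_)
  exact Subsemiring.pow_mem _ ((algebraMap A B).mem_rangeS_self (x i)) _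

lemma isWF_nonneg_isInteger_smul {K : Type*} [Field K] [LinearOrder K] [IsStrictOrderedRing K]
    {d : ℤ} (hd : d ≠ 0) : {q : K | 0 ≤ q ∧ IsLocalization.IsInteger ℤ (d • q)}.IsWF := by
  have multiples_isWF : (range fun n : ℕ => (n : K) / |(d : K)|).IsWF := by
    rw [← image_univ]
    refine ((isPWO_of_wellQuasiOrderedLE univ).image_of_monotone fun m n hmn => ?_).isWF
    gcongr
  refine multiples_isWF.mono ?_
  rintro q ⟨hq, z, hz⟩
  have hd' : (d : K) ≠ 0 := Int.cast_ne_zero.2 hd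
  refine ⟨z.natAbs, ?_⟩
  calc (z.natAbs : K) / |(d : K)| = |(z : K) / d| := by
        rw [abs_div, Nat.cast_natAbs, Int.cast_abs]
    _ = |q| := by
        rw [show (z : K) = d * q by simpa using hz, mul_div_cancel_left₀ q hd']
    _ = q := abs_of_nonneg hq

section IntegerPoints

variable {X : Type*}

/-- The candidate ranking function on integer valuations defined by a rational polynomial; its
values stay in `ℚ`. -/
noncomputable def intEval (p : MvPolynomial X ℚ) (x : X → ℤ) : ℚ :=
  MvPolynomial.aeval (fun i => (x i : ℚ)) p

lemma isWF_range_intEval_inter_Ici (p : MvPolynomial X ℚ) : (range (intEval p) ∩ Ici 0).IsWF := by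
  obtain ⟨d, hd⟩ := exists_forall_isInteger_smul_aeval (nonZeroDivisors ℤ) p
  refine (isWF_nonneg_isInteger_smul (nonZeroDivisors.coe_ne_zero d)).mono ?_
  rintro _ ⟨⟨x, rfl⟩, hx⟩
  exact ⟨hx, hd x⟩

theorem lex_prf_algorithm_sound_general {N : ℕ} (P : Fin N → Finset (MvPolynomial X ℚ))
    (R : ℕ → (X → ℤ) → (X → ℤ) → Prop)
    (hstep : ∀ k (hk : k < N), ∀ x y, R k x y →
      (∀ p ∈ P ⟨k, hk⟩, intEval p x = intEval p y) → R (k + 1) x y)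
    (hq : ∀ k (hk : k < N), ∀ p ∈ P ⟨k, hk⟩, IsQuasiRanking (R k) (intEval p))
    (hempty : ∀ x y, ¬ R N x y) :
    ¬ ∃ f : ℕ → X → ℤ, ∀ i, R 0 (f i) (f (i + 1)) := by
  rintro ⟨f, hf⟩
  have tail_survives (k : ℕ) (hk : k ≤ N) : ∀ᶠ i in atTop, R k (f i) (f (i + 1)) := by
    induction k with
    | zero => exact Eventually.of_forall hf
    | succ k ih =>
      exact IsQuasiRanking.eventually_rel_of_restrict (hq k hk)
        (fun p _ => isWF_range_intEval_inter_Ici p) (hstep k hk) (ih (Nat.le_of_succ_le hk))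
  obtain ⟨i, hi⟩ := (tail_survives N le_rfl).exists
  exact hempty _ _ hi

end IntegerPoints

/-- Soundness of the lexicographic polynomial ranking algorithm: repeatedly
restricting the transition relation to transitions preserving all discovered
quasi-ranking functions, if the final relation is empty then the original
relation terminates over ℤ. -/
theorem lex_prf_algorithm_sound
    {X : Type*} [Fintype X]
    (R : (X → ℤ) → (X → ℤ) → Prop)
    (N : ℕ)
    (P : Fin N → Finset (MvPolynomial X ℚ))
    (Rk : ℕ → ((X → ℤ) → (X → ℤ) → Prop))
    (h0 : Rk 0 = R)
    (hstep : ∀ k : ℕ, ∀ hk : k < N, ∀ x y : X → ℤ,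
      Rk (k + 1) x y ↔ (Rk k x y ∧ ∀ p ∈ P ⟨k, hk⟩,
        MvPolynomial.aeval (fun i => (x i : ℚ)) p =
          MvPolynomial.aeval (fun i => (y i : ℚ)) p))
    (hq : ∀ k : ℕ, ∀ hk : k < N, ∀ p ∈ P ⟨k, hk⟩, ∀ x y : X → ℤ, Rk k x y →
      MvPolynomial.aeval (fun i => (y i : ℚ)) p ≤ MvPolynomial.aeval (fun i => (x i : ℚ)) p ∧
      0 ≤ MvPolynomial.aeval (fun i => (x i : ℚ)) p)
    (hempty : ∀ x y : X → ℤ, ¬ Rk N x y) :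
    ¬ ∃ f : ℕ → (X → ℤ), ∀ i : ℕ, R (f i) (f (i + 1)) := by
  subst h0
  exact lex_prf_algorithm_sound_general P Rk
    (fun k hk x y hxy hP => (hstep k hk x y).2 ⟨hxy, hP⟩) hq hempty
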